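/- Let M be a positive integer, a an integer coprime to M, L a positive integer, and G_L = ∑_{m=0}^{L−1} a^m. Then there is an isomorphism of additive groups (ZMod M)[X^{±1}] ⧸ Ideal.span {(X − a)(X − 1), G_L · (X − 1)} ≅ ZMod M × ZMod (gcd(M, G_L)), where the one-variable Laurent polynomial ring (ZMod M)[X^{±1}] is realized as AddMonoidAlgebra (ZMod M) ℤ. -/

import Mathlib

/-- The one-variable Laurent polynomial ring `(ZMod M)[X^{±1}]`. -/
abbrev L1 (M : ℕ) : Type := AddMonoidAlgebra (ZMod M) ℤ

/-- The monomial `X`. -/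
noncomputable def Xv (M : ℕ) : L1 M := AddMonoidAlgebra.single (1 : ℤ) 1

/-- The unit `!![1, 1; 0, a]` of the ring of `2 × 2` matrices, for `a` with inverse `b`. -/
def unipotentScale {R : Type*} [CommRing R] (a b : R) (h : a * b = 1) :
    (Matrix (Fin 2) (Fin 2) R)ˣ where
  val := !![1, 1; 0, a]
  inv := !![1, -b; 0, b]
  val_inv := by
    ext i j
    fin_cases i <;> fin_cases j <;> simp [Matrix.mul_apply, Fin.sum_univ_two, h]
  inv_val := by
    have h' : b * a = 1 := by rw [mul_comm, h]
    ext i j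
    fin_cases i <;> fin_cases j <;> simp [Matrix.mul_apply, Fin.sum_univ_two, h']

/-- The evaluation of Laurent polynomials at the matrix `!![1, 1; 0, a]`; the top row of the value
at `f` consists of `f(1)` and of the divided difference of `f` at `1` and `a`. -/
noncomputable def matrixEval {R : Type*} [CommRing R] (a b : R) (h : a * b = 1) :
    AddMonoidAlgebra R ℤ →ₐ[R] Matrix (Fin 2) (Fin 2) R :=
  AddMonoidAlgebra.lift R (Matrix (Fin 2) (Fin 2) R) ℤ
    ((Units.coeHom _).comp (zpowersHom _ (unipotentScale a b h)))

section

variable {R : Type*} [CommRing R] (a b : R) (h : a * b = 1)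

theorem matrixEval_single_one :
    matrixEval a b h (AddMonoidAlgebra.single 1 1) = !![1, 1; 0, a] := by
  rw [matrixEval, AddMonoidAlgebra.lift_single, one_smul]
  simp [unipotentScale]

theorem matrixEval_mul_single_one_zero_zero (f : AddMonoidAlgebra R ℤ) :
    matrixEval a b h (f * AddMonoidAlgebra.single 1 1) 0 0 = matrixEval a b h f 0 0 := by
  rw [map_mul, matrixEval_single_one]
  simp [Matrix.mul_apply, Fin.sum_univ_two]

theorem matrixEval_mul_single_one_zero_one (f : AddMonoidAlgebra R ℤ) :
    matrixEval a b h (f * AddMonoidAlgebra.single 1 1) 0 1 =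
      matrixEval a b h f 0 0 + matrixEval a b h f 0 1 * a := by
  rw [map_mul, matrixEval_single_one]
  simp [Matrix.mul_apply, Fin.sum_univ_two]

/-- The remainder of a Laurent polynomial after subtracting its linear interpolation at
`1` and `a`. -/
noncomputable def interpolationError : AddMonoidAlgebra R ℤ →ₗ[R] AddMonoidAlgebra R ℤ where
  toFun f := f - (algebraMap R _ (matrixEval a b h f 0 0) +
    algebraMap R _ (matrixEval a b h f 0 1) * (AddMonoidAlgebra.single 1 1 - 1))
  map_add' f g := by
    simp only [map_add, Matrix.add_apply]
    ring
  map_smul' r f := by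
    simp only [map_smul, Matrix.smul_apply, smul_eq_mul, map_mul, RingHom.id_apply]
    rw [Algebra.smul_def, Algebra.smul_def]
    ring

theorem interpolationError_apply (f : AddMonoidAlgebra R ℤ) :
    interpolationError a b h f = f - (algebraMap R _ (matrixEval a b h f 0 0) +
      algebraMap R _ (matrixEval a b h f 0 1) * (AddMonoidAlgebra.single 1 1 - 1)) :=
  rfl

theorem interpolationError_mul_single_one (f : AddMonoidAlgebra R ℤ) :
    interpolationError a b h (f * AddMonoidAlgebra.single 1 1) =
      interpolationError a b h f * AddMonoidAlgebra.single 1 1 +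
        algebraMap R _ (matrixEval a b h f 0 1) *
          ((AddMonoidAlgebra.single 1 1 - algebraMap R _ a) *
            (AddMonoidAlgebra.single 1 1 - 1)) := by
  simp only [interpolationError_apply, matrixEval_mul_single_one_zero_zero,
    matrixEval_mul_single_one_zero_one, map_add, map_mul]
  ring

theorem interpolationError_mem {I : Ideal (AddMonoidAlgebra R ℤ)}
    (hI : (AddMonoidAlgebra.single 1 1 - algebraMap R _ a) * (AddMonoidAlgebra.single 1 1 - 1) ∈ I)
    (f : AddMonoidAlgebra R ℤ) : interpolationError a b h f ∈ I := by
  have step (g : AddMonoidAlgebra R ℤ) :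
      interpolationError a b h (g * AddMonoidAlgebra.single 1 1) ∈ I ↔
        interpolationError a b h g ∈ I := by
    rw [interpolationError_mul_single_one, I.add_mem_iff_left (I.mul_mem_left _ hI)]
    refine ⟨fun hg => ?_, fun hg => I.mul_mem_right _ hg⟩
    have := I.mul_mem_right (AddMonoidAlgebra.single (-1) 1) hg
    rwa [mul_assoc, AddMonoidAlgebra.single_mul_single, add_neg_cancel, one_mul,
      ← AddMonoidAlgebra.one_def, mul_one] at this
  have succ (n : ℤ) : (AddMonoidAlgebra.single (n + 1) 1 : AddMonoidAlgebra R ℤ) =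
      AddMonoidAlgebra.single n 1 * AddMonoidAlgebra.single 1 1 := by
    rw [AddMonoidAlgebra.single_mul_single, one_mul]
  have mono (n : ℤ) : interpolationError a b h (AddMonoidAlgebra.single n 1) ∈ I := by
    induction n with
    | zero =>
      rw [← AddMonoidAlgebra.one_def, interpolationError_apply]
      simp
    | succ n ih => rwa [succ, step]
    | pred n ih => rwa [← step, ← succ, sub_add_cancel]
  induction f using AddMonoidAlgebra.induction_linear with
  | zero => simp
  | add f g hf hg => rw [map_add]; exact I.add_mem hf hg
  | single n r =>
    have : (AddMonoidAlgebra.single n r : AddMonoidAlgebra R ℤ) =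
        r • AddMonoidAlgebra.single n 1 := by
      rw [AddMonoidAlgebra.smul_single, smul_eq_mul, mul_one]
    rw [this, map_smul, Algebra.smul_def]
    exact I.mul_mem_left _ (mono n)

end

/-- A residue class modulo `M` vanishing modulo `gcd(M, G)` is a multiple of `G`. -/
theorem ZMod.intCast_dvd_of_castHom_gcd_eq_zero {M : ℕ} {G : ℤ} {x : ZMod M}
    (hx : ZMod.castHom (Int.gcd_dvd_natAbs_left (M : ℤ) G) (ZMod (Int.gcd M G)) x = 0) :
    (G : ZMod M) ∣ x := by
  obtain ⟨t, rfl⟩ := ZMod.intCast_surjective x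
  rw [map_intCast, ZMod.intCast_zmod_eq_zero_iff_dvd] at hx
  obtain ⟨s, rfl⟩ := hx
  rw [Int.gcd_eq_gcd_ab]
  exact ⟨Int.gcdB M G * s, by push_cast; simp [mul_assoc]⟩

/-- For `a` coprime to `M` and `G_L = ∑_{m<L} a^m`, the quotient of `(ZMod M)[X^{±1}]` by
`((X-a)(X-1), G_L (X-1))` is `ZMod M × ZMod (gcd(M, G_L))` as an additive group. -/
theorem stmt16 (M : ℕ) (hM : 0 < M) (a : ℤ) (ha : IsCoprime a (M : ℤ))
    (L : ℕ) (hL : 0 < L) :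
    Nonempty ((L1 M ⧸ Ideal.span
        {(Xv M - (a : L1 M)) * (Xv M - 1),
          ((∑ m ∈ Finset.range L, a ^ m : ℤ) : L1 M) * (Xv M - 1)}) ≃+
      (ZMod M × ZMod (Int.gcd (M : ℤ) (∑ m ∈ Finset.range L, a ^ m)))) := by
  generalize (∑ m ∈ Finset.range L, a ^ m : ℤ) = G
  obtain ⟨b, hab⟩ : ∃ b : ZMod M, (a : ZMod M) * b = 1 := by
    obtain ⟨u, v, huv⟩ := ha
    refine ⟨u, ?_⟩
    have := congrArg (Int.cast : ℤ → ZMod M) huv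
    push_cast at this
    rw [ZMod.natCast_self, mul_zero, add_zero] at this
    rw [mul_comm, this]
  set I : Ideal (L1 M) := Ideal.span {(Xv M - (a : L1 M)) * (Xv M - 1), (G : L1 M) * (Xv M - 1)}
  let φ := matrixEval (a : ZMod M) b hab
  let π := ZMod.castHom (Int.gcd_dvd_natAbs_left (M : ℤ) G) (ZMod (Int.gcd M G))
  have hX : φ (Xv M) = !![1, 1; 0, (a : ZMod M)] := matrixEval_single_one _ _ _
  have hX1 : φ (Xv M - 1) = !![0, 1; 0, (a : ZMod M) - 1] := by
    rw [map_sub, hX, map_one]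
    ext i j
    fin_cases i <;> fin_cases j <;> simp
  have hXa : φ ((Xv M - (a : L1 M)) * (Xv M - 1)) = 0 := by
    rw [map_mul, hX1, map_sub, hX, map_intCast]
    ext i j
    fin_cases i <;> fin_cases j <;>
      simp [Matrix.mul_apply, Fin.sum_univ_two, Matrix.intCast_apply]
  let Φ : L1 M →+ ZMod M × ZMod (Int.gcd (M : ℤ) G) :=
    { toFun f := (φ f 0 0, π (φ f 0 1))
      map_zero' := by simp
      map_add' f g := by simp }
  have hΦ : Φ.ker = I.toAddSubgroup := by
    ext f
    rw [AddMonoidHom.mem_ker, Submodule.mem_toAddSubgroup]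
    constructor
    · intro hf
      have h0 : φ f 0 0 = 0 := congrArg Prod.fst hf
      obtain ⟨c, hc⟩ := ZMod.intCast_dvd_of_castHom_gcd_eq_zero (congrArg Prod.snd hf)
      have herr := interpolationError_mem (a : ZMod M) b hab (I := I)
        (by rw [map_intCast]; exact Ideal.subset_span (Or.inl rfl)) f
      rw [interpolationError_apply] at herr
      refine (I.sub_mem_iff_left ?_).1 herr
      change algebraMap _ _ (φ f 0 0) + algebraMap _ _ (φ f 0 1) * (Xv M - 1) ∈ I
      rw [h0, map_zero, zero_add, hc, map_mul, map_intCast, mul_comm (G : L1 M), mul_assoc]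
      exact I.mul_mem_left _ (Ideal.subset_span (Or.inr rfl))
    · intro hf
      obtain ⟨p, q, rfl⟩ := Ideal.mem_span_pair.1 hf
      have key : φ (p * ((Xv M - (a : L1 M)) * (Xv M - 1)) + q * ((G : L1 M) * (Xv M - 1))) =
          (G : ZMod M) • (φ q * !![0, 1; 0, (a : ZMod M) - 1]) := by
        rw [map_add, map_mul φ p, hXa, mul_zero, zero_add, ← hX1, ← map_mul, ← map_smul,
          Algebra.smul_def, map_intCast]
        congr 1
        ring
      change (φ _ 0 0, π (φ _ 0 1)) = 0
      rw [key]
      have hG : π (G : ZMod M) = 0 := by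
        rw [map_intCast, ZMod.intCast_zmod_eq_zero_iff_dvd]
        exact Int.gcd_dvd_right _ _
      simp [Matrix.mul_apply, Fin.sum_univ_two, hG, -map_intCast]
  have hsurj : Function.Surjective Φ := by
    rintro ⟨r, s⟩
    obtain ⟨s, rfl⟩ : ∃ t : ZMod M, π t = s :=
      ZMod.castHom_surjective (Int.gcd_dvd_natAbs_left (M : ℤ) G) s
    refine ⟨algebraMap _ _ r + algebraMap _ _ s * (Xv M - 1), ?_⟩
    have key : φ (algebraMap _ _ r + algebraMap _ _ s * (Xv M - 1)) =
        !![r, s; 0, r + s * ((a : ZMod M) - 1)] := by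
      rw [map_add, map_mul, hX1, AlgHom.commutes, AlgHom.commutes, ← Algebra.smul_def]
      ext i j
      fin_cases i <;> fin_cases j <;> simp [Matrix.algebraMap_matrix_apply]
    change (φ _ 0 0, π (φ _ 0 1)) = _
    rw [key]
    simp [π]
  exact ⟨(QuotientAddGroup.quotientAddEquivOfEq hΦ.symm).trans
    (QuotientAddGroup.quotientKerEquivOfSurjective Φ hsurj)⟩
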